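/- For each ε ∈ {+1, −1}, let Φ_ε = 1⊗1⊗1 + (ε − 1)·e1⊗e1⊗e1 ∈ Q⊗Q⊗Q, α_ε = 1 and β_ε = e0 + ε·e1, where e0 = (1+K²)/2 and e1 = (1−K²)/2. Then (Q, Φ_ε, S, α_ε, β_ε) is a quasi-Hopf algebra: (i) Φ_ε is invertible and counital, i.e. (id⊗ε⊗id)(Φ_ε) = 1⊗1; (ii) (Δ⊗id)(Δ(a)) = Φ_ε · (id⊗Δ)(Δ(a)) · Φ_ε^{-1} for all a ∈ Q; (iii) the 3-cocycle identity (Δ⊗id⊗id)(Φ_ε)·(id⊗id⊗Δ)(Φ_ε) = (Φ_ε⊗1)·(id⊗Δ⊗id)(Φ_ε)·(1⊗Φ_ε) holds; (iv) for all a ∈ Q, writing Δ(a) = Σ a'⊗a'', one has Σ S(a')·a'' = ε(a)·1 and Σ a'·β_ε·S(a'') = ε(a)·β_ε; (v) writing Φ_ε = Σ Φ'⊗Φ''⊗Φ''' and Φ_ε^{-1} = Σ \barΦ'⊗\barΦ''⊗\barΦ''', one has Σ S(Φ')·Φ''·β_ε·S(Φ''') = 1 and Σ \barΦ'·β_ε·S(\barΦ'')·\barΦ'''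 = 1. -/

import Mathlib

open TensorProduct

set_option maxHeartbeats 1000000
set_option synthInstance.maxHeartbeats 400000

noncomputable section

/-- Generators of the restricted quantum group `Q = \bar U_i sl(2)`. -/
inductive QGen : Type
  | E | F | K | Kinv
deriving DecidableEq

/-- The free algebra on the generators. -/
abbrev FA : Type := FreeAlgebra ℂ QGen

def ιE : FA := FreeAlgebra.ι ℂ QGen.E
def ιF : FA := FreeAlgebra.ι ℂ QGen.F
def ιK : FA := FreeAlgebra.ι ℂ QGen.K
def ιKi : FA := FreeAlgebra.ι ℂ QGen.Kinv

/-- Defining relations of `\bar U_i sl(2)` (at `q = i`, i.e. `p = 2`). -/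
inductive QRel : FA → FA → Prop
  | KKi : QRel (ιK * ιKi) 1
  | KiK : QRel (ιKi * ιK) 1
  | KEKi : QRel (ιK * ιE * ιKi) (-ιE)
  | KFKi : QRel (ιK * ιF * ιKi) (-ιF)
  | EF : QRel (ιE * ιF - ιF * ιE) ((2 * Complex.I)⁻¹ • (ιK - ιKi))
  | Esq : QRel (ιE ^ 2) 0
  | Fsq : QRel (ιF ^ 2) 0
  | K4 : QRel (ιK ^ 4) 1

/-- The restricted quantum group `\bar U_i sl(2)`: the quotient of the free algebra
by the two-sided ideal generated by the defining relations. -/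
abbrev Q : Type := RingQuot QRel

def gE : Q := RingQuot.mkAlgHom ℂ QRel ιE
def gF : Q := RingQuot.mkAlgHom ℂ QRel ιF
def gK : Q := RingQuot.mkAlgHom ℂ QRel ιK
def gKi : Q := RingQuot.mkAlgHom ℂ QRel ιKi

section Gadgets

variable (k : Type) [Field k] (A : Type) [Ring A] [Algebra k A]

abbrev TP2 : Type := A ⊗[k] A
abbrev TP3 : Type := A ⊗[k] (A ⊗[k] A)
abbrev TP4 : Type := A ⊗[k] (A ⊗[k] (A ⊗[k] A))

/-- Multiplication `a ⊗ b ↦ a * b`. -/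
def mulA : TP2 k A →ₗ[k] A := LinearMap.mul' k A

/-- Tensor flip `a ⊗ b ↦ b ⊗ a`. -/
def flipA : TP2 k A →ₗ[k] TP2 k A := (TensorProduct.comm k A A).toLinearMap

/-- `a ↦ a ⊗ 1`. -/
def lTen : A →ₗ[k] TP2 k A := (TensorProduct.mk k A A).flip 1

/-- `a ↦ 1 ⊗ a`. -/
def rTen : A →ₗ[k] TP2 k A := TensorProduct.mk k A A 1

/-- `a ⊗ b ↦ a ⊗ b ⊗ 1`. -/
def emb12 : TP2 k A →ₗ[k] TP3 k A := TensorProduct.map LinearMap.id (lTen k A)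

/-- `a ⊗ b ↦ a ⊗ 1 ⊗ b`. -/
def emb13 : TP2 k A →ₗ[k] TP3 k A := TensorProduct.map LinearMap.id (rTen k A)

/-- `a ⊗ b ↦ 1 ⊗ a ⊗ b`. -/
def emb23 : TP2 k A →ₗ[k] TP3 k A := TensorProduct.mk k A (TP2 k A) 1

/-- `a ⊗ b ⊗ c ↦ a ⊗ c ⊗ b`. -/
def perm132 : TP3 k A →ₗ[k] TP3 k A := TensorProduct.map LinearMap.id (flipA k A)

/-- `a ⊗ b ⊗ c ↦ b ⊗ c ⊗ a`. -/
def perm231 : TP3 k A →ₗ[k] TP3 k A :=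
  (TensorProduct.assoc k A A A).toLinearMap ∘ₗ (TensorProduct.comm k A (TP2 k A)).toLinearMap

/-- `a ⊗ b ⊗ c ↦ c ⊗ a ⊗ b`. -/
def perm312 : TP3 k A →ₗ[k] TP3 k A :=
  (TensorProduct.comm k (TP2 k A) A).toLinearMap ∘ₗ (TensorProduct.assoc k A A A).symm.toLinearMap

/-- `a ⊗ b ⊗ c ↦ b ⊗ a ⊗ c`. -/
def perm213 : TP3 k A →ₗ[k] TP3 k A :=
  (TensorProduct.assoc k A A A).toLinearMap ∘ₗ
    (TensorProduct.map (flipA k A) LinearMap.id) ∘ₗ (TensorProduct.assoc k A A A).symm.toLinearMap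

variable {k A}

/-- `(Δ ⊗ id)` on two tensor factors, landing in the triple tensor product. -/
def copL (D : A →ₐ[k] TP2 k A) : TP2 k A →ₗ[k] TP3 k A :=
  (TensorProduct.assoc k A A A).toLinearMap ∘ₗ TensorProduct.map D.toLinearMap LinearMap.id

/-- `(id ⊗ Δ)` on two tensor factors. -/
def copR (D : A →ₐ[k] TP2 k A) : TP2 k A →ₗ[k] TP3 k A :=
  TensorProduct.map LinearMap.id D.toLinearMap

/-- `(ε ⊗ id) : A ⊗ A → A`. -/
def cuL (ce : A →ₐ[k] k) : TP2 k A →ₗ[k] A :=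
  (TensorProduct.lid k A).toLinearMap ∘ₗ TensorProduct.map ce.toLinearMap LinearMap.id

/-- `(id ⊗ ε) : A ⊗ A → A`. -/
def cuR (ce : A →ₐ[k] k) : TP2 k A →ₗ[k] A :=
  (TensorProduct.rid k A).toLinearMap ∘ₗ TensorProduct.map LinearMap.id ce.toLinearMap

/-- `(id ⊗ ε ⊗ id) : A ⊗ A ⊗ A → A ⊗ A`. -/
def cuMid (ce : A →ₐ[k] k) : TP3 k A →ₗ[k] TP2 k A :=
  TensorProduct.map LinearMap.id (cuL ce)

/-- `(Δ ⊗ id ⊗ id)`. -/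
def cop4_1 (D : A →ₐ[k] TP2 k A) : TP3 k A →ₗ[k] TP4 k A :=
  (TensorProduct.assoc k A A (TP2 k A)).toLinearMap ∘ₗ TensorProduct.map D.toLinearMap LinearMap.id

/-- `(id ⊗ Δ ⊗ id)`. -/
def cop4_2 (D : A →ₐ[k] TP2 k A) : TP3 k A →ₗ[k] TP4 k A :=
  TensorProduct.map LinearMap.id (copL D)

/-- `(id ⊗ id ⊗ Δ)`. -/
def cop4_3 (D : A →ₐ[k] TP2 k A) : TP3 k A →ₗ[k] TP4 k A :=
  TensorProduct.map LinearMap.id (copR D)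

/-- `a ⊗ b ⊗ c ↦ a ⊗ b ⊗ c ⊗ 1`, i.e. `Φ ↦ Φ ⊗ 1`. -/
def pad4 : TP3 k A →ₗ[k] TP4 k A :=
  TensorProduct.map LinearMap.id (TensorProduct.map LinearMap.id (lTen k A))

/-- `a ⊗ b ⊗ c ↦ f(a) * g(b) * h(c)`. -/
def tmap3 (f g h : A →ₗ[k] A) : TP3 k A →ₗ[k] A :=
  mulA k A ∘ₗ TensorProduct.map f (mulA k A ∘ₗ TensorProduct.map g h)

/-- `a ⊗ b ↦ S(a) * b`, used in the antipode axiom `m ∘ (S ⊗ id) ∘ Δ = 1·ε`. -/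
def antipL (s : A →ₗ[k] A) : TP2 k A →ₗ[k] A := mulA k A ∘ₗ TensorProduct.map s LinearMap.id

/-- `a ⊗ b ↦ a * S(b)`. -/
def antipR (s : A →ₗ[k] A) : TP2 k A →ₗ[k] A := mulA k A ∘ₗ TensorProduct.map LinearMap.id s

end Gadgets

/-- Central idempotent `e₀ = (1 + K²)/2`. -/
def e0 : Q := (2:ℂ)⁻¹ • (1 + gK ^ 2)

/-- Central idempotent `e₁ = (1 − K²)/2`. -/
def e1 : Q := (2:ℂ)⁻¹ • (1 - gK ^ 2)

/-- `f⁺ = −i F`. -/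
def fp : Q := (-Complex.I) • gF

/-- `f⁻ = E K⁻¹`. -/
def fm : Q := gE * gKi

/-- The Casimir element `C = FE − (i/4)(K − K⁻¹)`. -/
def Cas : Q := gF * gE - (Complex.I / 4) • (gK - gKi)

def t2 (a b : Q) : TP2 ℂ Q := a ⊗ₜ[ℂ] b

def t3 (a b c : Q) : TP3 ℂ Q := a ⊗ₜ[ℂ] (b ⊗ₜ[ℂ] c)

def eEF : Q := gE * gF
def eEK : Q := gE * gK
def eFK : Q := gF * gK
def eEFK : Q := gE * gF * gK

/-- `Φ^{010}` component of the coassociator. -/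
def Phi010 : TP3 ℂ Q :=
  t3 1 1 1 - (1 + Complex.I) • t3 gE gK gF + (1 - Complex.I) • t3 eFK gK eEK
    + (2:ℂ) • t3 eEFK 1 eEFK

/-- `Φ^{101}` component of the coassociator. -/
def Phi101 : TP3 ℂ Q :=
  (Complex.I - 1) • t3 1 gF eEK + t3 1 gK 1 + (2:ℂ) • t3 1 eEF eEFK
    - (1 + Complex.I) • t3 1 eEK gF - (1 + Complex.I) • t3 gE eFK 1
    + (2 * Complex.I) • t3 gE eEFK gF + (1 - Complex.I) • t3 eFK gE 1
    - (2 * Complex.I) • t3 eFK eEFK eEK - (2:ℂ) • t3 eEFK eEF 1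

/-- `Φ^{111}` component of the coassociator. -/
def Phi111 (β : ℂ) : TP3 ℂ Q :=
  (Complex.I * β ^ 2) • (
    (1 + Complex.I) • t3 1 gF eEK - t3 1 gK 1 - (2:ℂ) • t3 1 eEF 1
      - (2 * Complex.I) • t3 1 eEF eEFK + (1 + Complex.I) • t3 1 eEK gF
      - (1 + Complex.I) • t3 gE 1 gF + (1 + Complex.I) • t3 gE eFK 1
      + (2 * Complex.I) • t3 gE eFK eEFK + (2:ℂ) • t3 gE eEFK gF
      - (1 + Complex.I) • t3 eFK 1 eEK + (1 + Complex.I) • t3 eFK gE 1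
      + (2 * Complex.I) • t3 eFK gE eEFK + (2:ℂ) • t3 eFK eEFK eEK
      + (2 * Complex.I) • t3 eEFK gF eEK + (2 * Complex.I) • t3 eEFK gK eEFK
      - (2 * Complex.I) • t3 eEFK eEF 1 + (2 * Complex.I) • t3 eEFK eEK gF
      + (4:ℂ) • t3 eEFK eEF eEFK)

/-- The coassociator `Φ` of the quasi-Hopf algebra structure on `Q`. -/
def Phi (β : ℂ) : TP3 ℂ Q :=
  t3 e0 e0 e0 + t3 e1 e0 e0 + Phi010 * t3 e0 e1 e0 + t3 e0 e0 e1
    + t3 e1 e1 e0 + Phi101 * t3 e1 e0 e1 + t3 e0 e1 e1 + Phi111 β * t3 e1 e1 e1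

def R00 : TP2 ℂ Q :=
  (2:ℂ)⁻¹ • ((t2 1 1 + t2 1 gK + t2 gK 1 - t2 gK gK) * (t2 1 1 + (2 * Complex.I) • t2 gE gF))

def R01 : TP2 ℂ Q :=
  (2:ℂ)⁻¹ • ((t2 1 1 - Complex.I • t2 1 gK + t2 gK 1 + Complex.I • t2 gK gK) *
    (t2 1 1 + (1 - Complex.I) • t2 eFK eEK - (1 - Complex.I) • t2 gE gF
      + (1 + Complex.I) • t2 eEFK 1 + (2 * Complex.I) • t2 eEFK eEFK))

def R10 : TP2 ℂ Q :=
  (2:ℂ)⁻¹ • ((t2 1 1 + t2 1 gK - Complex.I • t2 gK 1 + Complex.I • t2 gK gK) *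
    (t2 1 gK + (1 - Complex.I) • t2 eFK gE + (1 - Complex.I) • t2 gE eFK
      - (1 - Complex.I) • t2 1 eEF - (2 * Complex.I) • t2 eEFK eEF))

def R11 (β : ℂ) : TP2 ℂ Q :=
  (β / 2) • ((t2 1 1 - Complex.I • t2 1 gK - Complex.I • t2 gK 1 + t2 gK gK) *
    ((-Complex.I) • t2 gK 1 + (2 * Complex.I) • t2 eEK gF + (1 - Complex.I) • t2 gK eEFK
      - (1 + Complex.I) • t2 eEF 1 - (2 * Complex.I) • t2 eEF eEFK))

/-- The universal R-matrix `R` of the quasi-triangular quasi-Hopf structure on `Q`. -/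
def Rmat (β : ℂ) : TP2 ℂ Q :=
  R00 * t2 e0 e0 + R01 * t2 e0 e1 + R10 * t2 e1 e0 + R11 β * t2 e1 e1

/-- The standard R-matrix `R_st` of the quotient `Q/(K²-1)`. -/
def Rst : TP2 ℂ Q :=
  (2:ℂ)⁻¹ • ∑ m ∈ Finset.range 2, ∑ n ∈ Finset.range 2,
    ((-1:ℂ) ^ (m * n)) • (t2 (gK ^ m) (gK ^ n) * (t2 1 1 + (2 * Complex.I) • t2 gE gF))

/-- The monodromy matrix `M = R₂₁ · R`. -/
def Mmat (β : ℂ) : TP2 ℂ Q := flipA ℂ Q (Rmat β) * Rmat β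

/-- The ribbon element `v = (e₀ − iβ K e₁)(1 − 2 f⁺ f⁻)`. -/
def vRib (β : ℂ) : Q := (e0 - (Complex.I * β) • (gK * e1)) * (1 - (2:ℂ) • (fp * fm))

/-- The coevaluation element `β = e₀ − 2iβ² C e₁`. -/
def bbEl (β : ℂ) : Q := e0 - (2 * Complex.I * β ^ 2) • (Cas * e1)

/-- `b ⊗ c ↦ S(b · bb · S(c))`, inner part of the Drinfeld element. -/
def uInner (S : Q →ₗ[ℂ] Q) (bb : Q) : TP2 ℂ Q →ₗ[ℂ] Q :=
  S ∘ₗ mulA ℂ Q ∘ₗ TensorProduct.map (LinearMap.mulRight ℂ bb) S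

/-- `Φ' ⊗ Φ'' ⊗ Φ''' ↦ S(Φ'' · bb · S(Φ''')) ⊗ Φ'`. -/
def uMap1 (S : Q →ₗ[ℂ] Q) (bb : Q) : TP3 ℂ Q →ₗ[ℂ] TP2 ℂ Q :=
  TensorProduct.map (uInner S bb) LinearMap.id ∘ₗ (TensorProduct.comm ℂ Q (TP2 ℂ Q)).toLinearMap

/-- `R' ⊗ R'' ↦ S(R'') · al · R'`. -/
def uMap2 (S : Q →ₗ[ℂ] Q) (al : Q) : TP2 ℂ Q →ₗ[ℂ] Q :=
  mulA ℂ Q ∘ₗ TensorProduct.map (LinearMap.mulRight ℂ al ∘ₗ S) LinearMap.id ∘ₗ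
    (TensorProduct.comm ℂ Q Q).toLinearMap

/-- `(x ⊗ a) ⊗ (R' ⊗ R'') ↦ x · (S(R'') · al · R') · a`. -/
def uBig (S : Q →ₗ[ℂ] Q) (al : Q) : TP2 ℂ Q ⊗[ℂ] TP2 ℂ Q →ₗ[ℂ] Q :=
  mulA ℂ Q ∘ₗ TensorProduct.map LinearMap.id (mulA ℂ Q ∘ₗ (TensorProduct.comm ℂ Q Q).toLinearMap)
    ∘ₗ (TensorProduct.assoc ℂ Q Q Q).toLinearMap ∘ₗ TensorProduct.map LinearMap.id (uMap2 S al)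

/-- The Drinfeld element `u = Σ S(Φ''·b·S(Φ'''))·S(R'')·α·R'·Φ'` (with `α = 1`). -/
def uDrin (β : ℂ) (S : Q →ₗ[ℂ] Q) : Q :=
  uBig S 1 (uMap1 S (bbEl β) (Phi β) ⊗ₜ[ℂ] Rmat β)

/-- The balancing element `g = b · S(α) · v⁻¹ · u` (with `α = 1`). -/
def balG (β : ℂ) (S : Q →ₗ[ℂ] Q) : Q :=
  bbEl β * S 1 * Ring.inverse (vRib β) * uDrin β S

/-- The cointegral `c = (β²/i)·E·F·(1 + K + K² + K³)`. -/
def cInt (β : ℂ) : Q := (β ^ 2 / Complex.I) • (gE * gF * (1 + gK + gK ^ 2 + gK ^ 3))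

/-- The q-trace of a one-dimensional representation, with balancing element `K⁻¹`. -/
def qTr1 (ρ : Q →ₐ[ℂ] ℂ) : Q →ₗ[ℂ] ℂ := ρ.toLinearMap ∘ₗ LinearMap.mulLeft ℂ gK

/-- The q-trace of a two-dimensional (matrix) representation, with balancing element `K⁻¹`. -/
def qTrM (ρ : Q →ₐ[ℂ] Matrix (Fin 2) (Fin 2) ℂ) : Q →ₗ[ℂ] ℂ :=
  Matrix.traceLinearMap (Fin 2) ℂ ℂ ∘ₗ ρ.toLinearMap ∘ₗ LinearMap.mulLeft ℂ gK

/-- The Drinfeld mapping `φ ↦ (φ ⊗ id)(M)`. -/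
def drinfeldImg (β : ℂ) (φ : Q →ₗ[ℂ] ℂ) : Q :=
  (TensorProduct.lid ℂ Q) (TensorProduct.map φ LinearMap.id (Mmat β))

/-!
Since `ε² = 1`, the power `ε ^ n` depends only on `n` modulo `2`. Sending an idempotent `x` to
`1 + (ε - 1) x = ε ^ x` therefore turns the operation `x + y - 2xy`, which is addition modulo `2`
on `{0, 1}`, into multiplication. The element `K²` is group-like, so `e₁ = (1 - K²) / 2` satisfies
`Δ e₁ = e₁ ⊗ 1 + 1 ⊗ e₁ - 2 e₁ ⊗ e₁`; moreover `Φ_ε = ε ^ (e₁ ⊗ e₁ ⊗ e₁)` and `β_ε = ε ^ e₁`.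
Both sides of the cocycle identity then become the product of the four elements obtained by
inserting `Φ_ε` into three of the four tensor factors. Because `K²` is central, conjugation by
`Φ_ε` is trivial and the remaining axioms reduce to the Hopf algebra axioms and `(ε ^ x)² = 1`.
-/

section SignTwist

variable {R A : Type*} [CommRing R] [Ring A] [Algebra R A] {ε : R} {x y : A}

/-- The element `1 + (ε - 1) x`. For an idempotent `x` it acts as `ε` on the range of `x` and as
the identity on its kernel, so it encodes the function `ε ^ x` of a variable `x ∈ {0, 1}`. -/
def signTwist (ε : R) (x : A) : A := 1 + (ε - 1) • x

theorem signTwist_zero (ε : R) : signTwist ε (0 : A) = 1 := by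
  rw [signTwist, smul_zero, add_zero]

theorem map_signTwist {B : Type*} [Ring B] [Algebra R B] (f : A →ₗ[R] B) (hf : f 1 = 1) (ε : R)
    (x : A) : f (signTwist ε x) = signTwist ε (f x) := by
  simp only [signTwist, map_add, map_smul, hf]

-- `x + y - 2xy` is addition modulo `2` in `{0, 1}`, so this is `ε ^ (x + y) = ε ^ x * ε ^ y`.
theorem signTwist_add_sub_two_smul_mul (hε : ε * ε = 1) (x y : A) :
    signTwist ε (x + y - (2 : R) • (x * y)) = signTwist ε x * signTwist ε y := by
  have hsq : (ε - 1) * (ε - 1) = -2 * (ε - 1) := by linear_combination hε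
  simp only [signTwist, add_mul, mul_add, one_mul, mul_one, smul_mul_smul_comm, hsq]
  module

theorem signTwist_mul_self (hε : ε * ε = 1) (hx : IsIdempotentElem x) :
    signTwist ε x * signTwist ε x = 1 := by
  rw [← signTwist_add_sub_two_smul_mul hε, hx.eq, ← two_smul R x, sub_self, signTwist_zero]

theorem isUnit_signTwist (hε : ε * ε = 1) (hx : IsIdempotentElem x) : IsUnit (signTwist ε x) :=
  ⟨⟨_, _, signTwist_mul_self hε hx, signTwist_mul_self hε hx⟩, rfl⟩

theorem inverse_signTwist (hε : ε * ε = 1) (hx : IsIdempotentElem x) :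
    Ring.inverse (signTwist ε x) = signTwist ε x :=
  Ring.inverse_unit ⟨_, _, signTwist_mul_self hε hx, signTwist_mul_self hε hx⟩

theorem commute_signTwist_left (h : Commute x y) (ε : R) : Commute (signTwist ε x) y :=
  (Commute.one_left y).add_left (h.smul_left _)

theorem commute_signTwist_signTwist (h : Commute x y) (ε : R) :
    Commute (signTwist ε x) (signTwist ε y) :=
  commute_signTwist_left (commute_signTwist_left h.symm ε).symm ε

end SignTwist

section CentralTensors

variable {R A B : Type*} [CommRing R] [Ring A] [Algebra R A] [Ring B] [Algebra R B]

theorem commute_tmul_of_central {a : A} {b : B} (ha : ∀ x, Commute a x) (hb : ∀ y, Commute b y)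
    (t : A ⊗[R] B) : Commute (a ⊗ₜ[R] b) t := by
  induction t with
  | zero => exact .zero_right _
  | tmul x y => exact (ha x).tmul (hb y)
  | add t u ht hu => exact ht.add_right hu

theorem isIdempotentElem_tmul {a : A} {b : B} (ha : IsIdempotentElem a)
    (hb : IsIdempotentElem b) : IsIdempotentElem (a ⊗ₜ[R] b) := by
  rw [IsIdempotentElem, Algebra.TensorProduct.tmul_mul_tmul, ha.eq, hb.eq]

end CentralTensors

section TripleTwist

variable {k A : Type} [Field k] [Ring A] [Algebra k A] {e : A} {ε : k}

/-- The coassociator `Φ_ε = 1 + (ε - 1) e ⊗ e ⊗ e` attached to an element `e`. -/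
def signCoassociator (ε : k) (e : A) : TP3 k A := signTwist ε (e ⊗ₜ[k] (e ⊗ₜ[k] e))

theorem cuMid_signCoassociator (ce : A →ₐ[k] k) (he : ce e = 0) (ε : k) :
    cuMid ce (signCoassociator ε e) = 1 := by
  have cuMid_tmul (a b c : A) : cuMid ce (a ⊗ₜ (b ⊗ₜ c)) = a ⊗ₜ (ce b • c) := rfl
  have cuMid_one : cuMid ce 1 = 1 := by
    simp only [Algebra.TensorProduct.one_def, cuMid_tmul, map_one, one_smul]
  rw [signCoassociator, map_signTwist _ cuMid_one, cuMid_tmul, he, zero_smul, tmul_zero,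
    signTwist_zero]

section Cocycle

variable {D : A →ₐ[k] TP2 k A}

theorem cop4_1_signCoassociator (hε : ε * ε = 1) (he : IsIdempotentElem e)
    (hD : D e = e ⊗ₜ[k] 1 + 1 ⊗ₜ[k] e - (2 : k) • (e ⊗ₜ[k] e)) :
    cop4_1 D (signCoassociator ε e) =
      signTwist ε (e ⊗ₜ[k] ((1 : A) ⊗ₜ[k] (e ⊗ₜ[k] e))) *
        signTwist ε ((1 : A) ⊗ₜ[k] (e ⊗ₜ[k] (e ⊗ₜ[k] e))) := by
  have cop4_1_tmul (a : A) (t : TP2 k A) :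
      cop4_1 D (a ⊗ₜ t) = TensorProduct.assoc k A A (TP2 k A) (D a ⊗ₜ t) := rfl
  have cop4_1_one : cop4_1 D 1 = 1 := by
    rw [Algebra.TensorProduct.one_def, cop4_1_tmul, map_one]
    rfl
  rw [← signTwist_add_sub_two_smul_mul hε, signCoassociator, signTwist, map_add, map_smul,
    cop4_1_one, cop4_1_tmul, hD, signTwist]
  simp only [sub_tmul, add_tmul, ← smul_tmul', map_sub, map_add, map_smul, assoc_tmul,
    Algebra.TensorProduct.tmul_mul_tmul, mul_one, one_mul, he.eq]

theorem cop4_2_signCoassociator (hε : ε * ε = 1) (he : IsIdempotentElem e)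
    (hD : D e = e ⊗ₜ[k] 1 + 1 ⊗ₜ[k] e - (2 : k) • (e ⊗ₜ[k] e)) :
    cop4_2 D (signCoassociator ε e) =
      signTwist ε (e ⊗ₜ[k] (e ⊗ₜ[k] ((1 : A) ⊗ₜ[k] e))) *
        signTwist ε (e ⊗ₜ[k] ((1 : A) ⊗ₜ[k] (e ⊗ₜ[k] e))) := by
  have cop4_2_tmul (a b c : A) :
      cop4_2 D (a ⊗ₜ (b ⊗ₜ c)) = a ⊗ₜ TensorProduct.assoc k A A A (D b ⊗ₜ c) := rfl
  have cop4_2_one : cop4_2 D 1 = 1 := by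
    simp only [Algebra.TensorProduct.one_def, cop4_2_tmul, map_one, assoc_tmul]
  rw [← signTwist_add_sub_two_smul_mul hε, signCoassociator, signTwist, map_add, map_smul,
    cop4_2_one, cop4_2_tmul, hD, signTwist]
  simp only [sub_tmul, add_tmul, tmul_sub, tmul_add, tmul_smul, ← smul_tmul', map_sub, map_add,
    map_smul, assoc_tmul, Algebra.TensorProduct.tmul_mul_tmul, mul_one, one_mul, he.eq]

theorem cop4_3_signCoassociator (hε : ε * ε = 1) (he : IsIdempotentElem e)
    (hD : D e = e ⊗ₜ[k] 1 + 1 ⊗ₜ[k] e - (2 : k) • (e ⊗ₜ[k] e)) :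
    cop4_3 D (signCoassociator ε e) =
      signTwist ε (e ⊗ₜ[k] (e ⊗ₜ[k] (e ⊗ₜ[k] (1 : A)))) *
        signTwist ε (e ⊗ₜ[k] (e ⊗ₜ[k] ((1 : A) ⊗ₜ[k] e))) := by
  have cop4_3_tmul (a b c : A) : cop4_3 D (a ⊗ₜ (b ⊗ₜ c)) = a ⊗ₜ (b ⊗ₜ D c) := rfl
  have cop4_3_one : cop4_3 D 1 = 1 := by
    simp only [Algebra.TensorProduct.one_def, cop4_3_tmul, map_one]
  rw [← signTwist_add_sub_two_smul_mul hε, signCoassociator, signTwist, map_add, map_smul,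
    cop4_3_one, cop4_3_tmul, hD, signTwist]
  simp only [tmul_sub, tmul_add, tmul_smul, Algebra.TensorProduct.tmul_mul_tmul, mul_one, one_mul,
    he.eq]

theorem pad4_signCoassociator (ε : k) (e : A) :
    pad4 (signCoassociator ε e) = signTwist ε (e ⊗ₜ[k] (e ⊗ₜ[k] (e ⊗ₜ[k] (1 : A)))) := by
  rw [signCoassociator, signTwist, map_add, map_smul]
  rfl

theorem one_tmul_signCoassociator (ε : k) (e : A) :
    (1 : A) ⊗ₜ[k] signCoassociator ε e = signTwist ε ((1 : A) ⊗ₜ[k] (e ⊗ₜ[k] (e ⊗ₜ[k] e))) := by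
  rw [signCoassociator, signTwist, tmul_add, tmul_smul]
  rfl

theorem signCoassociator_cocycle (hε : ε * ε = 1) (he : IsIdempotentElem e)
    (hD : D e = e ⊗ₜ[k] 1 + 1 ⊗ₜ[k] e - (2 : k) • (e ⊗ₜ[k] e)) :
    cop4_1 D (signCoassociator ε e) * cop4_3 D (signCoassociator ε e) =
      pad4 (signCoassociator ε e) * cop4_2 D (signCoassociator ε e) *
        ((1 : A) ⊗ₜ[k] signCoassociator ε e) := by
  rw [cop4_1_signCoassociator hε he hD, cop4_2_signCoassociator hε he hD,
    cop4_3_signCoassociator hε he hD, pad4_signCoassociator, one_tmul_signCoassociator]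
  set t123 := signTwist ε (e ⊗ₜ[k] (e ⊗ₜ[k] (e ⊗ₜ[k] (1 : A))))
  set t124 := signTwist ε (e ⊗ₜ[k] (e ⊗ₜ[k] ((1 : A) ⊗ₜ[k] e)))
  set t134 := signTwist ε (e ⊗ₜ[k] ((1 : A) ⊗ₜ[k] (e ⊗ₜ[k] e)))
  set t234 := signTwist ε ((1 : A) ⊗ₜ[k] (e ⊗ₜ[k] (e ⊗ₜ[k] e)))
  have commute_legs {a b c d a' b' c' d' : A} (ha : Commute a a') (hb : Commute b b')
      (hc : Commute c c') (hd : Commute d d') :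
      Commute (signTwist ε (a ⊗ₜ[k] (b ⊗ₜ[k] (c ⊗ₜ[k] d))))
        (signTwist ε (a' ⊗ₜ[k] (b' ⊗ₜ[k] (c' ⊗ₜ[k] d')))) :=
    commute_signTwist_signTwist (ha.tmul (hb.tmul (hc.tmul hd))) ε
  have e_one : Commute e 1 := .one_right e
  have one_e : Commute 1 e := .one_left e
  have ee : Commute e e := .refl e
  have h : Commute (t134 * t234) (t123 * t124) :=
    Commute.mul_left (S := TP4 k A)
      (Commute.mul_right (S := TP4 k A) (commute_legs ee one_e ee e_one)
        (commute_legs ee one_e e_one ee))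
      (Commute.mul_right (S := TP4 k A) (commute_legs one_e ee ee e_one)
        (commute_legs one_e ee e_one ee))
  calc t134 * t234 * (t123 * t124)
      = t123 * t124 * (t134 * t234) := h.eq
    _ = t123 * (t124 * (t134 * t234)) := mul_assoc t123 t124 (t134 * t234)
    _ = t123 * (t124 * t134 * t234) := congrArg (t123 * ·) (mul_assoc t124 t134 t234).symm
    _ = t123 * (t124 * t134) * t234 := (mul_assoc t123 (t124 * t134) t234).symm

end Cocycle

section Antipode

variable {S : A →ₗ[k] A} {β : A}

theorem tmap3_apply_signCoassociator (f g h : A →ₗ[k] A) (ε : k) (e : A) :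
    tmap3 f g h (signCoassociator ε e) =
      f 1 * (g 1 * h 1) + (ε - 1) • (f e * (g e * h e)) := by
  rw [signCoassociator, signTwist, map_add, map_smul]
  rfl

theorem tmap3_antipode_id_signCoassociator (he : IsIdempotentElem e) (hβ : Commute e β)
    (hS1 : S 1 = 1) (hSe : S e = e) (ε : k) :
    tmap3 S LinearMap.id (LinearMap.mulLeft k β ∘ₗ S) (signCoassociator ε e) =
      β * signTwist ε e := by
  have hβe : e * (e * (β * e)) = β * e := by
    rw [← hβ.eq, ← mul_assoc e e β, he.eq, ← mul_assoc, he.eq]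
  simp only [tmap3_apply_signCoassociator, LinearMap.comp_apply, LinearMap.mulLeft_apply,
    LinearMap.id_apply, hS1, hSe, hβe, signTwist, mul_add, mul_smul_comm, mul_one, one_mul]

theorem tmap3_id_antipode_signCoassociator (he : IsIdempotentElem e) (hβ : Commute e β)
    (hS1 : S 1 = 1) (hSe : S e = e) (ε : k) :
    tmap3 LinearMap.id (LinearMap.mulLeft k β ∘ₗ S) LinearMap.id (signCoassociator ε e) =
      β * signTwist ε e := by
  have hβe : e * (β * e * e) = β * e := by
    rw [mul_assoc, he.eq, ← mul_assoc, hβ.eq, mul_assoc, he.eq]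
  simp only [tmap3_apply_signCoassociator, LinearMap.comp_apply, LinearMap.mulLeft_apply,
    LinearMap.id_apply, hS1, hSe, hβe, signTwist, mul_add, mul_smul_comm, mul_one, one_mul]

end Antipode

end TripleTwist

section GroupLikeInvolution

variable {k A : Type} [Field k] [Ring A] {g : A}

section Algebra

variable [Algebra k A]

/-- The projection `(1 - g) / 2` onto the `-1`-eigenspace of an involution `g`. -/
def minusIdempotent (k : Type) [Field k] [Algebra k A] (g : A) : A := (2 : k)⁻¹ • (1 - g)

theorem commute_minusIdempotent {a : A} (h : Commute g a) : Commute (minusIdempotent k g) a :=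
  ((Commute.one_left a).sub_left h).smul_left _

theorem isIdempotentElem_minusIdempotent [NeZero (2 : k)] (hg : g * g = 1) :
    IsIdempotentElem (minusIdempotent k g) := by
  have hg' : (1 - g) * (1 - g) = (2 : k) • (1 - g) := by
    rw [sub_mul, mul_sub, mul_sub, hg, one_mul, mul_one, one_mul]; module
  rw [IsIdempotentElem, minusIdempotent, smul_mul_smul_comm, hg', smul_smul, mul_assoc,
    inv_mul_cancel₀ two_ne_zero, mul_one]

theorem eq_one_sub_two_smul_minusIdempotent [NeZero (2 : k)] (g : A) :
    g = 1 - (2 : k) • minusIdempotent k g := by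
  rw [minusIdempotent, smul_inv_smul₀ two_ne_zero, sub_sub_cancel]

theorem antipR_mulLeft_comp (S : A →ₗ[k] A) {β : A} (hβ : ∀ a, Commute β a) (t : TP2 k A) :
    antipR (LinearMap.mulLeft k β ∘ₗ S) t = β * antipR S t := by
  induction t using TensorProduct.induction_on with
  | zero => rw [map_zero, map_zero, mul_zero]
  | tmul a b => exact ((hβ a).left_comm (S b)).symm
  | add t u ht hu => rw [map_add, map_add, ht, hu, mul_add]

end Algebra

open Coalgebra HopfAlgebra

theorem comul_minusIdempotent [Bialgebra k A] [NeZero (2 : k)] (hg : IsGroupLikeElem k g) :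
    comul (R := k) (minusIdempotent k g) =
      minusIdempotent k g ⊗ₜ[k] 1 + 1 ⊗ₜ[k] minusIdempotent k g -
        (2 : k) • (minusIdempotent k g ⊗ₜ[k] minusIdempotent k g) := by
  have comul_eq : comul (R := k) (minusIdempotent k g) = (2 : k)⁻¹ • (1 ⊗ₜ[k] 1 - g ⊗ₜ[k] g) := by
    rw [minusIdempotent, map_smul, map_sub, Bialgebra.comul_one, hg.comul_eq_tmul_self,
      Algebra.TensorProduct.one_def]
  rw [comul_eq, inv_smul_eq_iff₀ two_ne_zero]
  nth_rw 1 2 [eq_one_sub_two_smul_minusIdempotent (k := k) g]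
  simp only [sub_tmul, tmul_sub, ← smul_tmul', tmul_smul]
  module

theorem counit_minusIdempotent [Bialgebra k A] (hg : IsGroupLikeElem k g) :
    counit (R := k) (minusIdempotent k g) = 0 := by
  rw [minusIdempotent, map_smul, map_sub, Bialgebra.counit_one, hg.counit_eq_one, sub_self,
    smul_zero]

theorem antipode_eq_self_of_mul_self_eq_one [HopfAlgebra k A] (hg : IsGroupLikeElem k g)
    (hgg : g * g = 1) : antipode k g = g :=
  left_inv_eq_right_inv hg.antipode_mul_cancel hgg

theorem antipode_minusIdempotent [HopfAlgebra k A] (hg : IsGroupLikeElem k g)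
    (hgg : g * g = 1) : antipode k (minusIdempotent k g) = minusIdempotent k g := by
  rw [minusIdempotent, map_smul, map_sub, antipode_one,
    antipode_eq_self_of_mul_self_eq_one hg hgg]

theorem antipL_antipode_comul [HopfAlgebra k A] (a : A) :
    antipL (antipode k : A →ₗ[k] A) (comul (R := k) a) = counit (R := k) a • (1 : A) :=
  (mul_antipode_rTensor_comul_apply a).trans (Algebra.algebraMap_eq_smul_one _)

theorem antipR_antipode_comul [HopfAlgebra k A] (a : A) :
    antipR (antipode k : A →ₗ[k] A) (comul (R := k) a) = counit (R := k) a • (1 : A) :=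
  (mul_antipode_lTensor_comul_apply a).trans (Algebra.algebraMap_eq_smul_one _)

theorem statement5_general [HopfAlgebra k A] [NeZero (2 : k)] {ε : k} (hε : ε * ε = 1)
    (hg : IsGroupLikeElem k g) (hgg : g * g = 1) (hcentral : ∀ a, Commute g a) :
    let e := minusIdempotent k g
    let Δ := Bialgebra.comulAlgHom k A
    let Φ := signCoassociator ε e
    let β := signTwist ε e
    IsUnit Φ ∧
    cuMid (Bialgebra.counitAlgHom k A) Φ = 1 ∧
    (∀ a : A, copL Δ (Δ a) = Φ * copR Δ (Δ a) * Ring.inverse Φ) ∧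
    cop4_1 Δ Φ * cop4_3 Δ Φ = pad4 Φ * cop4_2 Δ Φ * ((1 : A) ⊗ₜ[k] Φ) ∧
    (∀ a : A, antipL (antipode k) (Δ a) = counit (R := k) a • (1 : A)) ∧
    (∀ a : A, antipR (LinearMap.mulLeft k β ∘ₗ antipode k) (Δ a) = counit (R := k) a • β) ∧
    tmap3 (antipode k) LinearMap.id (LinearMap.mulLeft k β ∘ₗ antipode k) Φ = 1 ∧
    tmap3 LinearMap.id (LinearMap.mulLeft k β ∘ₗ antipode k) LinearMap.id
      (Ring.inverse Φ) = 1 := by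
  intro e Δ Φ β
  have he : IsIdempotentElem e := isIdempotentElem_minusIdempotent hgg
  have hee : IsIdempotentElem (e ⊗ₜ[k] (e ⊗ₜ[k] e)) :=
    isIdempotentElem_tmul he (isIdempotentElem_tmul he he)
  have e_central (a : A) : Commute e a := commute_minusIdempotent (hcentral a)
  have β_central (a : A) : Commute β a := commute_signTwist_left (e_central a) ε
  have Φ_central (t : TP3 k A) : Commute Φ t :=
    commute_signTwist_left
      (commute_tmul_of_central e_central (commute_tmul_of_central e_central e_central) t) ε
  have Φ_inverse : Ring.inverse Φ = Φ := inverse_signTwist hε hee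
  have hS1 : antipode k (1 : A) = 1 := antipode_one
  have hSe : antipode k e = e := antipode_minusIdempotent hg hgg
  have hΔe : Δ e = e ⊗ₜ[k] 1 + 1 ⊗ₜ[k] e - (2 : k) • (e ⊗ₜ[k] e) := comul_minusIdempotent hg
  have hΦΦ : Φ * Φ = 1 := signTwist_mul_self hε hee
  have hββ : β * β = 1 := signTwist_mul_self hε he
  rw [Φ_inverse]
  refine ⟨isUnit_signTwist hε hee, cuMid_signCoassociator _ (counit_minusIdempotent hg) ε,
    fun a ↦ ?_, signCoassociator_cocycle hε he hΔe, antipL_antipode_comul, fun a ↦ ?_,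
    (tmap3_antipode_id_signCoassociator he (e_central β) hS1 hSe ε).trans hββ,
    (tmap3_id_antipode_signCoassociator he (e_central β) hS1 hSe ε).trans hββ⟩
  · rw [(Φ_central _).eq, mul_assoc, hΦΦ, mul_one]
    exact coassoc_apply a
  · rw [antipR_mulLeft_comp _ β_central]
    exact (congrArg (β * ·) (antipR_antipode_comul a)).trans (by simp only [mul_smul_comm, mul_one])

end GroupLikeInvolution

section HopfOfAdjoin

variable {k A : Type} [Field k] [Ring A] [Algebra k A]

theorem copL_tmul (Δ : A →ₐ[k] TP2 k A) (a b : A) :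
    copL Δ (a ⊗ₜ b) = TensorProduct.assoc k A A A (Δ a ⊗ₜ b) := rfl

theorem copR_tmul (Δ : A →ₐ[k] TP2 k A) (a b : A) : copR Δ (a ⊗ₜ b) = a ⊗ₜ Δ b := rfl

theorem cuL_tmul (ce : A →ₐ[k] k) (a b : A) : cuL ce (a ⊗ₜ b) = ce a • b := rfl

theorem cuR_tmul (ce : A →ₐ[k] k) (a b : A) : cuR ce (a ⊗ₜ b) = ce b • a := rfl

theorem antipL_tmul (S : A →ₗ[k] A) (a b : A) : antipL S (a ⊗ₜ b) = S a * b := rfl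

theorem antipR_tmul (S : A →ₗ[k] A) (a b : A) : antipR S (a ⊗ₜ b) = a * S b := rfl

section AntipodeAxioms

variable {S : A →ₗ[k] A}

theorem antipL_mul_tmul (hS : ∀ a b, S (a * b) = S b * S a) (t : TP2 k A) (x y : A) :
    antipL S (t * x ⊗ₜ[k] y) = S x * antipL S t * y := by
  induction t using TensorProduct.induction_on with
  | zero => rw [zero_mul, map_zero, mul_zero, zero_mul]
  | tmul a b =>
    rw [Algebra.TensorProduct.tmul_mul_tmul, antipL_tmul, antipL_tmul, hS]
    simp only [mul_assoc]
  | add t u ht hu => rw [add_mul, map_add, map_add, ht, hu, mul_add, add_mul]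

theorem antipR_tmul_mul (hS : ∀ a b, S (a * b) = S b * S a) (x y : A) (t : TP2 k A) :
    antipR S (x ⊗ₜ[k] y * t) = x * antipR S t * S y := by
  induction t using TensorProduct.induction_on with
  | zero => rw [mul_zero, map_zero, mul_zero, zero_mul]
  | tmul a b =>
    rw [Algebra.TensorProduct.tmul_mul_tmul, antipR_tmul, antipR_tmul, hS]
    simp only [mul_assoc]
  | add t u ht hu => rw [mul_add, map_add, map_add, ht, hu, mul_add, add_mul]

theorem antipL_mul_of_eq_smul_one (hS : ∀ a b, S (a * b) = S b * S a) {t : TP2 k A} {c : k}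
    (ht : antipL S t = c • 1) (u : TP2 k A) : antipL S (t * u) = c • antipL S u := by
  induction u using TensorProduct.induction_on with
  | zero => rw [mul_zero, map_zero, smul_zero]
  | tmul x y => rw [antipL_mul_tmul hS, ht, mul_smul_comm, mul_one, smul_mul_assoc]; rfl
  | add u v hu hv => rw [mul_add, map_add, map_add, hu, hv, smul_add]

theorem antipR_mul_of_eq_smul_one (hS : ∀ a b, S (a * b) = S b * S a) {u : TP2 k A} {c : k}
    (hu : antipR S u = c • 1) (t : TP2 k A) : antipR S (t * u) = c • antipR S t := by
  induction t using TensorProduct.induction_on with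
  | zero => rw [zero_mul, map_zero, smul_zero]
  | tmul x y => rw [antipR_tmul_mul hS, hu, mul_smul_comm, mul_one, smul_mul_assoc]; rfl
  | add t v ht hv => rw [add_mul, map_add, map_add, ht, hv, smul_add]

variable {s : Set A} {Δ : A →ₐ[k] TP2 k A} {ce : A →ₐ[k] k}

theorem antipL_comul_of_adjoin_eq_top (hs : Algebra.adjoin k s = ⊤) (hS1 : S 1 = 1)
    (hS : ∀ a b, S (a * b) = S b * S a) (h : ∀ x ∈ s, antipL S (Δ x) = ce x • (1 : A)) (a : A) :
    antipL S (Δ a) = ce a • (1 : A) := by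
  induction (hs ▸ Algebra.mem_top : a ∈ Algebra.adjoin k s) using Algebra.adjoin_induction with
  | mem x hx => exact h x hx
  | algebraMap r =>
    have antipL_one : antipL S (1 : TP2 k A) = 1 := (mul_one (S 1)).trans hS1
    rw [Algebra.algebraMap_eq_smul_one, map_smul, map_one, map_smul, antipL_one, map_smul,
      map_one, smul_eq_mul, mul_one]
  | add x y _ _ hx hy => rw [map_add, map_add, map_add, hx, hy, add_smul]
  | mul x y _ _ hx hy =>
    rw [map_mul Δ, map_mul ce, antipL_mul_of_eq_smul_one hS hx, hy, smul_smul]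

theorem antipR_comul_of_adjoin_eq_top (hs : Algebra.adjoin k s = ⊤) (hS1 : S 1 = 1)
    (hS : ∀ a b, S (a * b) = S b * S a) (h : ∀ x ∈ s, antipR S (Δ x) = ce x • (1 : A)) (a : A) :
    antipR S (Δ a) = ce a • (1 : A) := by
  induction (hs ▸ Algebra.mem_top : a ∈ Algebra.adjoin k s) using Algebra.adjoin_induction with
  | mem x hx => exact h x hx
  | algebraMap r =>
    have antipR_one : antipR S (1 : TP2 k A) = 1 := (one_mul (S 1)).trans hS1
    rw [Algebra.algebraMap_eq_smul_one, map_smul, map_one, map_smul, antipR_one, map_smul,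
      map_one, smul_eq_mul, mul_one]
  | add x y _ _ hx hy => rw [map_add, map_add, map_add, hx, hy, add_smul]
  | mul x y _ _ hx hy =>
    rw [map_mul Δ, map_mul ce, antipR_mul_of_eq_smul_one hS hy, hx, smul_smul, mul_comm]

end AntipodeAxioms

/-- The Hopf algebra structure on an algebra generated by `s` whose comultiplication and counit are
algebra maps and whose antipode is an algebra antihomomorphism: the Hopf axioms need only be
checked on `s`. -/
abbrev hopfAlgebraOfAdjoin {s : Set A} (hs : Algebra.adjoin k s = ⊤) (Δ : A →ₐ[k] TP2 k A)
    (ce : A →ₐ[k] k) (S : A →ₗ[k] A)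
    (coassoc : ∀ x ∈ s, copL Δ (Δ x) = copR Δ (Δ x))
    (counit_left : ∀ x ∈ s, cuL ce (Δ x) = x) (counit_right : ∀ x ∈ s, cuR ce (Δ x) = x)
    (hS1 : S 1 = 1) (hS : ∀ a b, S (a * b) = S b * S a)
    (antipode_left : ∀ x ∈ s, antipL S (Δ x) = ce x • (1 : A))
    (antipode_right : ∀ x ∈ s, antipR S (Δ x) = ce x • (1 : A)) : HopfAlgebra k A where
  toBialgebra := Bialgebra.ofAlgHom Δ ce
    (AlgHom.ext_of_adjoin_eq_top hs fun x hx ↦ coassoc x hx)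
    (AlgHom.ext_of_adjoin_eq_top hs fun x hx ↦
      (TensorProduct.lid k A).eq_symm_apply.mpr (counit_left x hx))
    (AlgHom.ext_of_adjoin_eq_top hs fun x hx ↦
      (TensorProduct.rid k A).eq_symm_apply.mpr (counit_right x hx))
  antipode := S
  mul_antipode_rTensor_comul := LinearMap.ext fun a ↦
    (antipL_comul_of_adjoin_eq_top hs hS1 hS antipode_left a).trans
      (Algebra.algebraMap_eq_smul_one _).symm
  mul_antipode_lTensor_comul := LinearMap.ext fun a ↦
    (antipR_comul_of_adjoin_eq_top hs hS1 hS antipode_right a).trans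
      (Algebra.algebraMap_eq_smul_one _).symm

/-- The Hopf algebra structure on an algebra generated by a group-like element `K` with inverse
`K'` and skew-primitive elements `E` and `F`. -/
abbrev hopfAlgebraOfSkewPrimitive {E F K K' : A} (hs : Algebra.adjoin k {E, F, K} = ⊤)
    (hKK' : K * K' = 1) (hK'K : K' * K = 1) (Δ : A →ₐ[k] TP2 k A)
    (hΔE : Δ E = 1 ⊗ₜ[k] E + E ⊗ₜ[k] K) (hΔF : Δ F = K' ⊗ₜ[k] F + F ⊗ₜ[k] 1)
    (hΔK : Δ K = K ⊗ₜ[k] K)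
    (ce : A →ₐ[k] k) (hceE : ce E = 0) (hceF : ce F = 0) (hceK : ce K = 1)
    (S : A →ₗ[k] A) (hS1 : S 1 = 1) (hS : ∀ a b, S (a * b) = S b * S a)
    (hSE : S E = -(E * K')) (hSF : S F = -(K * F)) (hSK : S K = K') : HopfAlgebra k A := by
  have hΔ1 : Δ 1 = 1 ⊗ₜ[k] 1 := map_one Δ
  have hΔK' : Δ K' = K' ⊗ₜ[k] K' :=
    left_inv_eq_right_inv (a := Δ K) (by rw [← map_mul, hK'K, map_one])
      (by rw [hΔK, Algebra.TensorProduct.tmul_mul_tmul, hKK', Algebra.TensorProduct.one_def])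
  have hceK' : ce K' = 1 :=
    left_inv_eq_right_inv (a := ce K) (by rw [← map_mul, hK'K, map_one]) (by rw [hceK, mul_one])
  have hSK' : S K' = K := left_inv_eq_right_inv (by rw [← hSK, ← hS, hSK, hKK', hS1]) hK'K
  refine hopfAlgebraOfAdjoin hs Δ ce S ?coassoc ?counit_left ?counit_right hS1 hS ?antipode_left
    ?antipode_right
  case coassoc =>
    rintro x (rfl | rfl | rfl) <;>
      simp only [hΔE, hΔF, hΔK, hΔK', hΔ1, map_add, copL_tmul, copR_tmul, add_tmul, tmul_add,
        assoc_tmul, add_assoc]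
  case counit_left =>
    rintro x (rfl | rfl | rfl) <;>
      simp only [hΔE, hΔF, hΔK, map_add, cuL_tmul, map_one, hceE, hceF, hceK, hceK', one_smul,
        zero_smul, add_zero]
  case counit_right =>
    rintro x (rfl | rfl | rfl) <;>
      simp only [hΔE, hΔF, hΔK, map_add, cuR_tmul, map_one, hceE, hceF, hceK, one_smul, zero_smul,
        zero_add]
  case antipode_left =>
    rintro x (rfl | rfl | rfl) <;>
      simp only [hΔE, hΔF, hΔK, map_add, antipL_tmul, hS1, hSE, hSF, hSK, hSK', hceE, hceF, hceK,
        one_mul, mul_one, neg_mul, mul_assoc, hK'K, add_neg_cancel, zero_smul, one_smul]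
  case antipode_right =>
    rintro x (rfl | rfl | rfl) <;>
      simp only [hΔE, hΔF, hΔK, map_add, antipR_tmul, hS1, hSE, hSF, hSK, hceE, hceF, hceK,
        one_mul, mul_one, mul_neg, ← mul_assoc, hKK', hK'K, neg_add_cancel, zero_smul, one_smul]

end HopfOfAdjoin

theorem commute_sq_of_conj_eq_neg {R : Type*} [Ring R] {a a' b : R} (ha : a' * a = 1)
    (h : a * b * a' = -b) : Commute (a ^ 2) b := by
  have anticommute : a * b = -(b * a) := by rw [← neg_mul, ← h, mul_assoc, ha, mul_one]
  calc a ^ 2 * b = a * (a * b) := by rw [pow_two, mul_assoc]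
    _ = b * a ^ 2 := by
      rw [anticommute, mul_neg, ← mul_assoc, anticommute, neg_mul, neg_neg, mul_assoc, pow_two]

section RestrictedQuantumGroup

theorem gK_mul_gKi : gK * gKi = 1 := by
  simpa only [gK, gKi, map_mul, map_one] using RingQuot.mkAlgHom_rel ℂ QRel.KKi

theorem gKi_mul_gK : gKi * gK = 1 := by
  simpa only [gK, gKi, map_mul, map_one] using RingQuot.mkAlgHom_rel ℂ QRel.KiK

theorem gK_mul_gE_mul_gKi : gK * gE * gKi = -gE := by
  simpa only [gE, gK, gKi, map_mul, map_neg] using RingQuot.mkAlgHom_rel ℂ QRel.KEKi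

theorem gK_mul_gF_mul_gKi : gK * gF * gKi = -gF := by
  simpa only [gF, gK, gKi, map_mul, map_neg] using RingQuot.mkAlgHom_rel ℂ QRel.KFKi

theorem gK_pow_four : gK ^ 4 = 1 := by
  simpa only [gK, map_pow, map_one] using RingQuot.mkAlgHom_rel ℂ QRel.K4

theorem gKi_eq_gK_pow_three : gKi = gK ^ 3 :=
  left_inv_eq_right_inv gKi_mul_gK ((pow_succ' gK 3).symm.trans gK_pow_four)

theorem adjoin_gE_gF_gK : Algebra.adjoin ℂ {gE, gF, gK} = ⊤ := by
  have gK_mem : gK ∈ Algebra.adjoin ℂ {gE, gF, gK} := Algebra.subset_adjoin (by simp)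
  rw [eq_top_iff, ← (AlgHom.range_eq_top _).mpr (RingQuot.mkAlgHom_surjective ℂ QRel),
    ← Algebra.map_top, ← FreeAlgebra.adjoin_range_ι, AlgHom.map_adjoin, ← Set.range_comp,
    Algebra.adjoin_le_iff]
  rintro _ ⟨_ | _ | _ | _, rfl⟩
  · exact Algebra.subset_adjoin (Set.mem_insert gE _)
  · exact Algebra.subset_adjoin (Set.mem_insert_of_mem gE (Set.mem_insert gF _))
  · exact gK_mem
  · exact (gKi_eq_gK_pow_three ▸ pow_mem gK_mem 3 : gKi ∈ _)

theorem commute_gK_sq (a : Q) : Commute (gK ^ 2) a := by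
  induction (adjoin_gE_gF_gK ▸ Algebra.mem_top : a ∈ Algebra.adjoin ℂ {gE, gF, gK})
    using Algebra.adjoin_induction with
  | mem x hx =>
    rcases hx with rfl | rfl | rfl
    · exact commute_sq_of_conj_eq_neg gKi_mul_gK gK_mul_gE_mul_gKi
    · exact commute_sq_of_conj_eq_neg gKi_mul_gK gK_mul_gF_mul_gKi
    · exact .pow_self _ _
  | algebraMap r => exact Algebra.commute_algebraMap_right r _
  | add x y _ _ hx hy => exact hx.add_right hy
  | mul x y _ _ hx hy => exact hx.mul_right hy

theorem e0_add_smul_e1 (ε : ℂ) : e0 + ε • e1 = signTwist ε e1 := by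
  unfold e0 e1 signTwist; module

end RestrictedQuantumGroup

/-- `(Q, Φ_ε, S, α_ε = 1, β_ε = e₀ + ε e₁)` is a quasi-Hopf algebra
for `ε = ±1`, where `Φ_ε = 1⊗1⊗1 + (ε−1)·e₁⊗e₁⊗e₁`. -/
theorem statement5 (Δ : Q →ₐ[ℂ] TP2 ℂ Q)
    (hΔE : Δ gE = (1:Q) ⊗ₜ[ℂ] gE + gE ⊗ₜ[ℂ] gK)
    (hΔF : Δ gF = gKi ⊗ₜ[ℂ] gF + gF ⊗ₜ[ℂ] (1:Q))
    (hΔK : Δ gK = gK ⊗ₜ[ℂ] gK)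
    (ce : Q →ₐ[ℂ] ℂ) (hceE : ce gE = 0) (hceF : ce gF = 0) (hceK : ce gK = 1)
    (S : Q →ₗ[ℂ] Q) (hS1 : S 1 = 1) (hSmul : ∀ a b : Q, S (a * b) = S b * S a)
    (hSE : S gE = -(gE * gKi)) (hSF : S gF = -(gK * gF)) (hSK : S gK = gKi)
    (ep : ℂ) (hep : ep = 1 ∨ ep = -1) :
    IsUnit ((1 : TP3 ℂ Q) + (ep - 1) • t3 e1 e1 e1) ∧
    cuMid ce ((1 : TP3 ℂ Q) + (ep - 1) • t3 e1 e1 e1) = 1 ∧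
    (∀ a : Q, copL Δ (Δ a) =
      ((1 : TP3 ℂ Q) + (ep - 1) • t3 e1 e1 e1) * copR Δ (Δ a) *
        Ring.inverse ((1 : TP3 ℂ Q) + (ep - 1) • t3 e1 e1 e1)) ∧
    cop4_1 Δ ((1 : TP3 ℂ Q) + (ep - 1) • t3 e1 e1 e1) *
        cop4_3 Δ ((1 : TP3 ℂ Q) + (ep - 1) • t3 e1 e1 e1) =
      pad4 ((1 : TP3 ℂ Q) + (ep - 1) • t3 e1 e1 e1) *
        cop4_2 Δ ((1 : TP3 ℂ Q) + (ep - 1) • t3 e1 e1 e1) *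
        ((1:Q) ⊗ₜ[ℂ] ((1 : TP3 ℂ Q) + (ep - 1) • t3 e1 e1 e1)) ∧
    (∀ a : Q, antipL S (Δ a) = ce a • (1:Q)) ∧
    (∀ a : Q,
      antipR (LinearMap.mulLeft ℂ (e0 + ep • e1) ∘ₗ S) (Δ a) = ce a • (e0 + ep • e1)) ∧
    tmap3 S LinearMap.id (LinearMap.mulLeft ℂ (e0 + ep • e1) ∘ₗ S)
      ((1 : TP3 ℂ Q) + (ep - 1) • t3 e1 e1 e1) = 1 ∧
    tmap3 LinearMap.id (LinearMap.mulLeft ℂ (e0 + ep • e1) ∘ₗ S) LinearMap.id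
      (Ring.inverse ((1 : TP3 ℂ Q) + (ep - 1) • t3 e1 e1 e1)) = 1 := by
  let := hopfAlgebraOfSkewPrimitive adjoin_gE_gF_gK gK_mul_gKi gKi_mul_gK
    Δ hΔE hΔF hΔK ce hceE hceF hceK S hS1 hSmul hSE hSF hSK
  have gK_groupLike : IsGroupLikeElem ℂ gK := ⟨hceK, hΔK⟩
  have gK_sq_involutive : gK ^ 2 * gK ^ 2 = 1 := (pow_add gK 2 2).symm.trans gK_pow_four
  rw [e0_add_smul_e1]
  exact statement5_general (mul_self_eq_one_iff.mpr hep) gK_groupLike.pow gK_sq_involutive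
    commute_gK_sq
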